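/- Let s > 0, x ∈ ℝ², let S ⊆ ℝ² be nonempty, and let ω ⊂ ℝ² be a finite configuration. Suppose (x₀, x₁, …, x_{N+1}) is a minimizer for A^s_ω(x, S), with length L. Let z ∈ ℝ² with z ∉ ω, and suppose there is an index i ∈ {0, …, N} and r ≥ 0 with |z − x_i| ≤ r. If (2rL + 2r²)/s ≤ 1/2, then A^s_{ω∪{z}}(x, S) ≤ A^s_ω(x, S) − 1/2. -/

import Mathlib

/-!
Visiting `z` right after the point `x_i` of the minimizer replaces the edge from `x_i` to
`x_{i+1}` by the detour through `z`, which costs at most `2r` in length (`pathLength_insert_le`),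
while the number of visited points goes up by one. The new action is therefore at most
`(L + 2r)² / (2s) - (N + 1) = L² / (2s) - N + (2rL + 2r²) / s - 1`, and the smallness hypothesis
bounds this by the old action minus `1/2`. Since the infimum is a real `sInf`, it is bounded by
the action of this competitor only once the set of actions is known to be bounded below; this
holds because an admissible sequence visits at most `cfg.card` points (`bddBelow_actions`).
-/

noncomputable section

/-- Points of the plane. -/
abbrev Pt := EuclideanSpace ℝ (Fin 2)

noncomputable instance : DecidableEq Pt := Classical.decEq _

/-- An admissible sequence for the configuration `cfg`, start `x` and target set `S`:
`p 0 = x`, `p (N+1) ∈ S`, and the interior points `p 1, …, p N` are pairwise distinct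
points of `cfg`. -/
def IsAdmissible (cfg : Finset Pt) (x : Pt) (S : Set Pt) (N : ℕ)
    (p : Fin (N + 2) → Pt) : Prop :=
  p 0 = x ∧ p (Fin.last (N + 1)) ∈ S ∧
    (∀ i : Fin (N + 2), i ≠ 0 → i ≠ Fin.last (N + 1) → p i ∈ cfg) ∧
    (∀ i j : Fin (N + 2), i ≠ 0 → i ≠ Fin.last (N + 1) → j ≠ 0 → j ≠ Fin.last (N + 1) →
      i ≠ j → p i ≠ p j)

/-- The length `L` of the polygonal path through `p 0, …, p (N+1)`. -/
def pathLength (N : ℕ) (p : Fin (N + 2) → Pt) : ℝ :=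
  ∑ i : Fin (N + 1), ‖p i.succ - p i.castSucc‖

/-- The action `L²/(2s) − N` of an admissible sequence. -/
def pathAction (s : ℝ) (N : ℕ) (p : Fin (N + 2) → Pt) : ℝ :=
  pathLength N p ^ 2 / (2 * s) - N

/-- The action `A^s_ω(x, S)`: the infimum of the action over admissible sequences. -/
def actionInf (cfg : Finset Pt) (s : ℝ) (x : Pt) (S : Set Pt) : ℝ :=
  sInf {a : ℝ | ∃ (N : ℕ) (p : Fin (N + 2) → Pt), IsAdmissible cfg x S N p ∧
    a = pathAction s N p}

/-- The sequence `p` with `z` inserted immediately after the index `i`. -/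
def insertAfter {N : ℕ} (p : Fin (N + 2) → Pt) (i : Fin (N + 1)) (z : Pt) : Fin (N + 3) → Pt :=
  fun a => if h : a.val ≤ i.val then p ⟨a.val, by omega⟩
    else if a.val = i.val + 1 then z else p ⟨a.val - 1, by omega⟩

lemma insertAfter_of_le {N : ℕ} (p : Fin (N + 2) → Pt) (i : Fin (N + 1)) (z : Pt)
    (a : Fin (N + 3)) (b : Fin (N + 2)) (h : a.val ≤ i.val) (hab : a.val = b.val) :
    insertAfter p i z a = p b := by
  simp only [insertAfter, h, dite_true]
  congr 1
  exact Fin.ext hab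

lemma insertAfter_self {N : ℕ} (p : Fin (N + 2) → Pt) (i : Fin (N + 1)) (z : Pt)
    (a : Fin (N + 3)) (h : a.val = i.val + 1) : insertAfter p i z a = z := by
  simp [insertAfter, h]

lemma insertAfter_of_gt {N : ℕ} (p : Fin (N + 2) → Pt) (i : Fin (N + 1)) (z : Pt)
    (a : Fin (N + 3)) (b : Fin (N + 2)) (h : i.val + 1 < a.val) (hab : a.val = b.val + 1) :
    insertAfter p i z a = p b := by
  have h1 : ¬ a.val ≤ i.val := by omega
  have h2 : ¬ a.val = i.val + 1 := by omega
  simp only [insertAfter, h1, h2, dite_false, if_false]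
  congr 1
  apply Fin.ext
  simp [hab]

lemma pathLength_insert_le {N : ℕ} (p : Fin (N + 2) → Pt) (i : Fin (N + 1)) (z : Pt) (r : ℝ)
    (hr : ‖z - p i.castSucc‖ ≤ r) :
    pathLength (N + 1) (insertAfter p i z) ≤ pathLength N p + 2 * r := by
  unfold pathLength
  -- Split off the edge from `x_i` to `z`; the other edges correspond to the edges of `p`.
  rw [Fin.sum_univ_succAbove _ i.castSucc]
  have hfirst : ‖insertAfter p i z i.castSucc.succ - insertAfter p i z i.castSucc.castSucc‖
      ≤ r := by
    rw [insertAfter_self p i z _ (by simp),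
      insertAfter_of_le p i z _ i.castSucc (by simp) (by simp)]
    exact hr
  have hrest : ∀ j : Fin (N + 1),
      ‖insertAfter p i z (i.castSucc.succAbove j).succ
        - insertAfter p i z (i.castSucc.succAbove j).castSucc‖
      ≤ ‖p j.succ - p j.castSucc‖ + if j = i then r else 0 := by
    intro j
    rcases lt_trichotomy j i with h | h | h
    · have hv : j.val < i.val := h
      rw [Fin.succAbove_of_castSucc_lt _ _ (by simpa using h),
        insertAfter_of_le p i z _ j.succ (by simp; omega) (by simp),
        insertAfter_of_le p i z _ j.castSucc (by simp; omega) (by simp)]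
      simp [h.ne]
    · subst h
      rw [Fin.succAbove_of_le_castSucc _ _ le_rfl,
        insertAfter_of_gt p j z _ j.succ (by simp) (by simp),
        insertAfter_self p j z _ (by simp), if_pos rfl]
      calc ‖p j.succ - z‖ = ‖(p j.succ - p j.castSucc) - (z - p j.castSucc)‖ := by
            congr 1; abel
        _ ≤ ‖p j.succ - p j.castSucc‖ + ‖z - p j.castSucc‖ := norm_sub_le _ _
        _ ≤ _ := by gcongr
    · have hv : i.val < j.val := h
      rw [Fin.succAbove_of_le_castSucc _ _ (by simpa using h.le),
        insertAfter_of_gt p i z _ j.succ (by simp; omega) (by simp),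
        insertAfter_of_gt p i z _ j.castSucc (by simp; omega) (by simp)]
      simp [h.ne']
  have hsum := Finset.sum_le_sum fun j (_ : j ∈ Finset.univ) => hrest j
  rw [Finset.sum_add_distrib, Finset.sum_ite_eq' Finset.univ i (fun _ => r),
    if_pos (Finset.mem_univ i)] at hsum
  linarith

lemma isAdmissible_insertAfter {cfg : Finset Pt} {x : Pt} {S : Set Pt} {N : ℕ}
    {p : Fin (N + 2) → Pt} (hadm : IsAdmissible cfg x S N p) {z : Pt} (hz : z ∉ cfg)
    (i : Fin (N + 1)) : IsAdmissible (insert z cfg) x S (N + 1) (insertAfter p i z) := by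
  obtain ⟨h0, hlast, hmem, hinj⟩ := hadm
  -- An interior point of the new sequence is either `z` or an interior point of `p`.
  have key : ∀ a : Fin (N + 3), a ≠ 0 → a ≠ Fin.last (N + 2) →
      (a.val = i.val + 1 ∧ insertAfter p i z a = z) ∨
      ∃ b : Fin (N + 2), b ≠ 0 ∧ b ≠ Fin.last (N + 1) ∧ insertAfter p i z a = p b ∧
        ((a.val ≤ i.val ∧ a.val = b.val) ∨ (i.val + 1 < a.val ∧ a.val = b.val + 1)) := by
    intro a ha0 hal
    have ha0 : a.val ≠ 0 := fun h => ha0 (Fin.ext h)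
    have hal : a.val ≠ N + 2 := fun h => hal (Fin.ext h)
    have hi := i.isLt
    rcases lt_trichotomy a.val (i.val + 1) with h | h | h
    · refine Or.inr ⟨⟨a.val, by omega⟩, ?_, ?_,
        insertAfter_of_le p i z _ _ (by omega) rfl, Or.inl ⟨by omega, rfl⟩⟩
      · intro hb; exact ha0 (congrArg Fin.val hb)
      · intro hb; have := congrArg Fin.val hb; simp at this; omega
    · exact Or.inl ⟨h, insertAfter_self p i z a h⟩
    · have hab : a.val = (a.val - 1) + 1 := by omega
      refine Or.inr ⟨⟨a.val - 1, by omega⟩, ?_, ?_,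
        insertAfter_of_gt p i z _ _ h hab, Or.inr ⟨h, hab⟩⟩
      · intro hb; have := congrArg Fin.val hb; simp at this; omega
      · intro hb; have := congrArg Fin.val hb; simp at this; omega
  refine ⟨?_, ?_, ?_, ?_⟩
  · rw [insertAfter_of_le p i z 0 0 (by simp) (by simp), h0]
  · rw [insertAfter_of_gt p i z _ (Fin.last (N + 1)) (by simp; omega) (by simp)]
    exact hlast
  · intro a ha0 hal
    rcases key a ha0 hal with ⟨-, h⟩ | ⟨b, hb0, hbl, h, -⟩
    · rw [h]; exact Finset.mem_insert_self _ _
    · rw [h]; exact Finset.mem_insert_of_mem (hmem b hb0 hbl)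
  · intro a a' ha0 hal ha0' hal' hne
    have hne : a.val ≠ a'.val := fun h => hne (Fin.ext h)
    rcases key a ha0 hal with ⟨hv, h⟩ | ⟨b, hb0, hbl, h, hv⟩ <;>
    rcases key a' ha0' hal' with ⟨hv', h'⟩ | ⟨b', hb0', hbl', h', hv'⟩ <;> rw [h, h']
    · omega
    · intro e; exact hz (e ▸ hmem b' hb0' hbl')
    · intro e; exact hz (e ▸ hmem b hb0 hbl)
    · apply hinj b b' hb0 hbl hb0' hbl'
      intro e
      have := congrArg Fin.val e
      omega

lemma IsAdmissible.le_card {cfg : Finset Pt} {x : Pt} {S : Set Pt} {N : ℕ}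
    {p : Fin (N + 2) → Pt} (hadm : IsAdmissible cfg x S N p) : N ≤ cfg.card := by
  obtain ⟨-, -, hmem, hinj⟩ := hadm
  have h0 : ∀ j : Fin N, j.castSucc.succ ≠ (0 : Fin (N + 2)) := fun j => Fin.succ_ne_zero _
  have hl : ∀ j : Fin N, j.castSucc.succ ≠ Fin.last (N + 1) := by
    intro j h
    have := congrArg Fin.val h
    have := j.isLt
    simp at *
  have := Finset.card_le_card_of_injOn (s := (Finset.univ : Finset (Fin N))) (t := cfg)
    (fun j => p j.castSucc.succ) (fun j _ => hmem _ (h0 j) (hl j)) (by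
      intro j _ k _ hjk
      by_contra hne
      exact hinj _ _ (h0 j) (hl j) (h0 k) (hl k) (by simpa using hne) hjk)
  simpa using this

lemma bddBelow_actions (cfg : Finset Pt) {s : ℝ} (hs : 0 < s) (x : Pt) (S : Set Pt) :
    BddBelow {a : ℝ | ∃ (N : ℕ) (p : Fin (N + 2) → Pt), IsAdmissible cfg x S N p ∧
      a = pathAction s N p} := by
  refine ⟨-(cfg.card : ℝ), ?_⟩
  rintro a ⟨N, p, hadm, rfl⟩
  have h1 : (N : ℝ) ≤ cfg.card := by exact_mod_cast hadm.le_card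
  have h2 : 0 ≤ pathLength N p ^ 2 / (2 * s) := by positivity
  unfold pathAction
  linarith

/-- If a new point `z ∉ ω` is within distance `r` of a point `x_i`,
`i ∈ {0, …, N}`, visited by a minimizer of length `L`, and `(2rL + 2r²)/s ≤ 1/2`,
then inserting `z` into the configuration decreases the optimal action by at least `1/2`. -/
theorem action_decrease_of_nearby_point (s : ℝ) (hs : 0 < s) (x : Pt) (S : Set Pt)
    (hS : S.Nonempty) (cfg : Finset Pt) (N : ℕ) (p : Fin (N + 2) → Pt)
    (hadm : IsAdmissible cfg x S N p)
    (hmin : pathAction s N p = actionInf cfg s x S)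
    (z : Pt) (hz : z ∉ cfg) (r : ℝ) (hr : 0 ≤ r)
    (hclose : ∃ i : Fin (N + 1), ‖z - p i.castSucc‖ ≤ r)
    (hsmall : (2 * r * pathLength N p + 2 * r ^ 2) / s ≤ 1 / 2) :
    actionInf (insert z cfg) s x S ≤ actionInf cfg s x S - 1 / 2 := by
  obtain ⟨i, hi⟩ := hclose
  have hle : actionInf (insert z cfg) s x S ≤ pathAction s (N + 1) (insertAfter p i z) :=
    csInf_le (bddBelow_actions _ hs x S) ⟨N + 1, _, isAdmissible_insertAfter hadm hz i, rfl⟩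
  have hlen := pathLength_insert_le p i z r hi
  have hnn : 0 ≤ pathLength (N + 1) (insertAfter p i z) :=
    Finset.sum_nonneg fun _ _ => norm_nonneg _
  have hsq : pathLength (N + 1) (insertAfter p i z) ^ 2 / (2 * s)
      ≤ (pathLength N p + 2 * r) ^ 2 / (2 * s) := by gcongr
  have hexp : (pathLength N p + 2 * r) ^ 2 / (2 * s)
      = pathLength N p ^ 2 / (2 * s) + (2 * r * pathLength N p + 2 * r ^ 2) / s := by
    field_simp
    ring
  rw [← hmin]
  refine hle.trans ?_
  unfold pathAction
  push_cast
  linarith
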